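/- Let r₂ > 0 and let F : ℝ^{3×3} → ℝ be twice continuously differentiable with F(0) = 0, F(A) ≥ 0 for every matrix A with |A| ≤ r₂, and F(A) = 0 only when A = 0 (for |A| ≤ r₂). Suppose Q : ℝ³ → ℝ^{3×3} is twice continuously differentiable, Q(x) is symmetric and traceless and |Q(x)| ≤ r₂ for every x ∈ ℝ³, Q solves −ΔQ(x) + L[∇F(Q(x))] = 0 for all x ∈ ℝ³, and the functions x ↦ |∇Q(x)|² and x ↦ F(Q(x)) are Lebesgue integrable on ℝ³. Then Q(x) = 0 for every x ∈ ℝ³. -/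

import Mathlib

open MeasureTheory Matrix

noncomputable section

/-- `ℝ³` with the Euclidean norm. -/
abbrev E3 : Type := EuclideanSpace ℝ (Fin 3)
/-- the space of `3×3` real matrices -/
abbrev Mat : Type := Matrix (Fin 3) (Fin 3) ℝ

attribute [local instance] Matrix.normedAddCommGroup Matrix.normedSpace

/-- Frobenius inner product `A : B`. -/
def frob (A B : Mat) : ℝ := ∑ i, ∑ j, A i j * B i j
/-- Frobenius norm `|A|`. -/
def frobNorm (A : Mat) : ℝ := Real.sqrt (frob A A)
/-- `L[A] = A - (1/3) tr A · I`, projection onto traceless matrices. -/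
def tracelessPart (A : Mat) : Mat := A - (Matrix.trace A / 3) • (1 : Mat)
/-- partial derivative `∂ₖ f` of a scalar function on `ℝ³` -/
def pd (k : Fin 3) (f : E3 → ℝ) (x : E3) : ℝ := fderiv ℝ f x (EuclideanSpace.single k 1)
/-- componentwise Laplacian `ΔQ` of a matrix-valued map -/
def lapM (Q : E3 → Mat) (x : E3) : Mat :=
  Matrix.of fun i j => ∑ k, pd k (fun y => pd k (fun z => Q z i j) y) x
/-- `|∇Q(x)|² = Σ_{k,i,j} (∂ₖ Q_{ij}(x))²` -/
def gradNormSq (Q : E3 → Mat) (x : E3) : ℝ := ∑ k, ∑ i, ∑ j, (pd k (fun y => Q y i j) x) ^ 2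
/-- Frobenius gradient `∇F(A)` of a function on matrices, with entries `∂F/∂A_{ij}`. -/
def matGrad (F : Mat → ℝ) (A : Mat) : Mat :=
  Matrix.of fun i j => fderiv ℝ F A (Matrix.single i j 1)


lemma pd_add {k : Fin 3} {f g : E3 → ℝ} {x : E3} (hf : DifferentiableAt ℝ f x)
    (hg : DifferentiableAt ℝ g x) : pd k (fun y => f y + g y) x = pd k f x + pd k g x := by
  unfold pd
  rw [fderiv_fun_add hf hg]; rfl

lemma pd_sub {k : Fin 3} {f g : E3 → ℝ} {x : E3} (hf : DifferentiableAt ℝ f x)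
    (hg : DifferentiableAt ℝ g x) : pd k (fun y => f y - g y) x = pd k f x - pd k g x := by
  unfold pd
  rw [fderiv_fun_sub hf hg]; rfl

lemma pd_mul {k : Fin 3} {f g : E3 → ℝ} {x : E3} (hf : DifferentiableAt ℝ f x)
    (hg : DifferentiableAt ℝ g x) :
    pd k (fun y => f y * g y) x = f x * pd k g x + pd k f x * g x := by
  unfold pd
  rw [fderiv_fun_mul hf hg]
  simp; ring

lemma pd_sum {ι : Type} {s : Finset ι} {k : Fin 3} {f : ι → E3 → ℝ} {x : E3}
    (hf : ∀ i ∈ s, DifferentiableAt ℝ (f i) x) :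
    pd k (fun y => ∑ i ∈ s, f i y) x = ∑ i ∈ s, pd k (f i) x := by
  unfold pd
  rw [fderiv_fun_sum hf]; simp

lemma pd_const {k : Fin 3} {c : ℝ} {x : E3} : pd k (fun _ => c) x = 0 := by
  unfold pd; simp

lemma contDiff_coord (l : Fin 3) : ContDiff ℝ 2 (fun x : E3 => x l) := by fun_prop

lemma pd_coord {k l : Fin 3} {x : E3} : pd k (fun y => y l) x = if k = l then 1 else 0 := by
  unfold pd
  have : (fun y : E3 => y l) = (EuclideanSpace.proj l : E3 →L[ℝ] ℝ) := by ext; simp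
  rw [this, ContinuousLinearMap.fderiv]
  simp [eq_comm]

lemma contDiff_pd {q : E3 → ℝ} (hq : ContDiff ℝ 2 q) (k : Fin 3) : ContDiff ℝ 1 (pd k q) := by
  unfold pd
  have : ContDiff ℝ 1 (fderiv ℝ q) := hq.fderiv_right (by norm_num)
  fun_prop

lemma continuous_pd {q : E3 → ℝ} (hq : ContDiff ℝ 1 q) (k : Fin 3) : Continuous (pd k q) := by
  unfold pd
  have : Continuous (fderiv ℝ q) := hq.continuous_fderiv (by norm_num)
  fun_prop

lemma pd_comm {q : E3 → ℝ} (hq : ContDiff ℝ 2 q) (k l : Fin 3) (x : E3) :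
    pd k (pd l q) x = pd l (pd k q) x := by
  have h1 : ContDiff ℝ 1 (fderiv ℝ q) := hq.fderiv_right (by norm_num)
  have hd : DifferentiableAt ℝ (fderiv ℝ q) x := (h1.differentiable (by norm_num)) x
  have key : ∀ k l : Fin 3, pd k (pd l q) x = fderiv ℝ (fderiv ℝ q) x
      (EuclideanSpace.single k 1) (EuclideanSpace.single l 1) := by
    intro k l
    unfold pd
    rw [fderiv_clm_apply hd (by fun_prop)]
    simp
  rw [key, key]
  have := (hq.contDiffAt (x := x)).isSymmSndFDerivAt (by simp)
  exact this _ _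

/-- scalar stress tensor -/
def S (q : E3 → ℝ) (k l : Fin 3) (x : E3) : ℝ :=
  (if k = l then (1/2) * ∑ m, pd m q x * pd m q x else 0) - pd k q x * pd l q x

lemma contDiff_S {q : E3 → ℝ} (hq : ContDiff ℝ 2 q) (k l : Fin 3) : ContDiff ℝ 1 (S q k l) := by
  have := contDiff_pd hq
  unfold S
  split_ifs <;> fun_prop

lemma pd_S {q : E3 → ℝ} (hq : ContDiff ℝ 2 q) (a k l : Fin 3) (x : E3) :
    pd a (S q k l) x = (if k = l then ∑ m, pd m q x * pd a (pd m q) x else 0)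
      - (pd k q x * pd a (pd l q) x + pd a (pd k q) x * pd l q x) := by
  have h : ∀ k, DifferentiableAt ℝ (pd k q) x := fun k =>
    (contDiff_pd hq k).differentiable (by norm_num) x
  unfold S
  split_ifs
  · rw [pd_sub (by fun_prop) (by fun_prop), pd_mul (h _) (h _), pd_mul (by fun_prop) (by fun_prop),
      pd_const, pd_sum (by intro i _; fun_prop)]
    simp_rw [pd_mul (h _) (h _)]
    simp only [Fin.sum_univ_three]
    ring
  · rw [pd_sub (by fun_prop) (by fun_prop), pd_mul (h _) (h _), pd_const]

lemma scalar_id {q : E3 → ℝ} (hq : ContDiff ℝ 2 q) (x : E3) :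
    ∑ k, pd k (fun y => ∑ l, S q k l y * y l) x
      = (1/2) * ∑ m, pd m q x ^ 2 - (∑ m, pd m (pd m q) x) * ∑ l, x l * pd l q x := by
  have hS : ∀ k l, DifferentiableAt ℝ (S q k l) x := fun k l =>
    (contDiff_S hq k l).differentiable (by norm_num) x
  have hc : ∀ l : Fin 3, DifferentiableAt ℝ (fun y : E3 => y l) x := fun l => by fun_prop
  have h1 : ∀ k, pd k (fun y => ∑ l, S q k l y * y l) x
      = ∑ l, (S q k l x * (if k = l then 1 else 0) + pd k (S q k l) x * x l) := by
    intro k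
    rw [pd_sum (f := fun l y => S q k l y * y l) (by intro i _; exact (hS k i).mul (hc i))]
    refine Finset.sum_congr rfl fun l _ => ?_
    rw [pd_mul (hS k l) (hc l), pd_coord]
  simp_rw [h1, pd_S hq]
  have c01 := pd_comm hq 0 1 x
  have c02 := pd_comm hq 0 2 x
  have c12 := pd_comm hq 1 2 x
  simp [Fin.sum_univ_three, S]
  rw [c01, c02, c12]
  ring

lemma radial_id {f : E3 → ℝ} (hf : ContDiff ℝ 1 f) (x : E3) :
    ∑ k, pd k (fun y => f y * y k) x = 3 * f x + ∑ l, x l * pd l f x := by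
  have hc : ∀ l : Fin 3, DifferentiableAt ℝ (fun y : E3 => y l) x := fun l => by fun_prop
  have hd := hf.differentiable (by norm_num) x
  simp_rw [pd_mul hd (hc _), pd_coord]
  simp [Fin.sum_univ_three]
  ring

/-- entries -/
def entry (i j : Fin 3) : Mat →L[ℝ] ℝ :=
  LinearMap.toContinuousLinearMap (Matrix.entryLinearMap ℝ ℝ i j)

lemma entry_apply (i j : Fin 3) (A : Mat) : entry i j A = A i j := rfl

lemma contDiff_entry {Q : E3 → Mat} (hQ : ContDiff ℝ 2 Q) (i j : Fin 3) :
    ContDiff ℝ 2 (fun x => Q x i j) :=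
  (entry i j).contDiff.comp hQ

lemma pd_comp {Q : E3 → Mat} (hQ : ContDiff ℝ 2 Q) {F : Mat → ℝ} (hF : ContDiff ℝ 2 F)
    (l : Fin 3) (x : E3) :
    pd l (fun y => F (Q y)) x = ∑ i, ∑ j, matGrad F (Q x) i j * pd l (fun y => Q y i j) x := by
  have hQd : DifferentiableAt ℝ Q x := hQ.differentiable (by norm_num) x
  have hFd : DifferentiableAt ℝ F (Q x) := hF.differentiable (by norm_num) _
  have h1 : pd l (fun y => F (Q y)) x
      = fderiv ℝ F (Q x) (fderiv ℝ Q x (EuclideanSpace.single l 1)) := by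
    unfold pd
    have := fderiv_comp x hFd hQd
    change fderiv ℝ (F ∘ Q) x _ = _
    rw [this]; rfl
  have h2 : ∀ i j, pd l (fun y => Q y i j) x
      = (fderiv ℝ Q x (EuclideanSpace.single l 1)) i j := by
    intro i j
    unfold pd
    have h : HasFDerivAt (fun y => Q y i j) ((entry i j).comp (fderiv ℝ Q x)) x :=
      (entry i j).hasFDerivAt.comp x hQd.hasFDerivAt
    rw [h.fderiv]
    rfl
  rw [h1]
  simp_rw [h2]
  generalize fderiv ℝ Q x (EuclideanSpace.single l 1) = B
  conv_lhs => rw [Matrix.matrix_eq_sum_single B]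
  simp only [map_sum]
  refine Finset.sum_congr rfl fun i _ => Finset.sum_congr rfl fun j _ => ?_
  have : Matrix.single i j (B i j) = B i j • (Matrix.single i j 1 : Mat) := by
    rw [Matrix.smul_single]; simp
  rw [this, map_smul]
  simp [matGrad, mul_comm]

/-- the Pohozaev field -/
def W (F : Mat → ℝ) (Q : E3 → Mat) (k l : Fin 3) (x : E3) : ℝ :=
  (∑ i, ∑ j, S (fun y => Q y i j) k l x) + (if k = l then F (Q x) else 0)

lemma contDiff_W {Q : E3 → Mat} (hQ : ContDiff ℝ 2 Q) {F : Mat → ℝ} (hF : ContDiff ℝ 2 F)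
    (k l : Fin 3) : ContDiff ℝ 1 (W F Q k l) := by
  have h1 := fun i j => contDiff_S (contDiff_entry hQ i j) k l
  have h2 : ContDiff ℝ 1 (fun x => F (Q x)) := (hF.comp hQ).of_le (by norm_num)
  have h3 : ContDiff ℝ 1 (fun x => ∑ i, ∑ j, S (fun y => Q y i j) k l x) := by fun_prop
  unfold W
  split_ifs
  · exact h3.add h2
  · exact h3.add contDiff_const

lemma div_id {Q : E3 → Mat} (hQ : ContDiff ℝ 2 Q) {F : Mat → ℝ} (hF : ContDiff ℝ 2 F)
    (htr : ∀ x, Matrix.trace (Q x) = 0)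
    (heq : ∀ x, -lapM Q x + tracelessPart (matGrad F (Q x)) = 0) (x : E3) :
    ∑ k, pd k (fun y => ∑ l, W F Q k l y * y l) x
      = (1/2) * gradNormSq Q x + 3 * F (Q x) := by
  have h2 : ContDiff ℝ 1 (fun x => F (Q x)) := (hF.comp hQ).of_le (by norm_num)
  have hS : ∀ i j k l, DifferentiableAt ℝ (S (fun y => Q y i j) k l) x := fun i j k l =>
    (contDiff_S (contDiff_entry hQ i j) k l).differentiable (by norm_num) x
  have hFd : DifferentiableAt ℝ (fun x => F (Q x)) x := h2.differentiable (by norm_num) x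
  have hc : ∀ l : Fin 3, DifferentiableAt ℝ (fun y : E3 => y l) x := fun l => by fun_prop
  have e1 : ∀ k, (fun y : E3 => ∑ l, W F Q k l y * y l) = fun y =>
      (∑ i, ∑ j, ∑ l, S (fun y => Q y i j) k l y * y l) + F (Q y) * y k := by
    intro k
    ext y
    simp only [W, add_mul, Finset.sum_add_distrib, Finset.sum_mul]
    congr 1
    · rw [Finset.sum_comm]
      refine Finset.sum_congr rfl fun i _ => ?_
      rw [Finset.sum_comm]
    · simp
  have e2 : ∀ k, pd k (fun y : E3 => ∑ l, W F Q k l y * y l) x =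
      (∑ i, ∑ j, pd k (fun y => ∑ l, S (fun y => Q y i j) k l y * y l) x)
        + pd k (fun y => F (Q y) * y k) x := by
    intro k
    have hm : DifferentiableAt ℝ (fun y : E3 => F (Q y) * y k) x := hFd.mul (hc k)
    rw [e1, pd_add (by fun_prop) hm, pd_sum (by intro i _; fun_prop)]
    congr 1
    refine Finset.sum_congr rfl fun i _ => ?_
    rw [pd_sum (by intro i _; fun_prop)]
  simp_rw [e2]
  rw [Finset.sum_add_distrib, radial_id h2, Finset.sum_comm]
  have e3 : ∀ i, ∑ k, ∑ j, pd k (fun y => ∑ l, S (fun y => Q y i j) k l y * y l) x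
      = ∑ j, ((1/2) * ∑ m, pd m (fun y => Q y i j) x ^ 2
        - lapM Q x i j * ∑ l, x l * pd l (fun y => Q y i j) x) := by
    intro i
    rw [Finset.sum_comm]
    refine Finset.sum_congr rfl fun j _ => ?_
    rw [scalar_id (contDiff_entry hQ i j)]
    rfl
  simp_rw [e3, pd_comp hQ hF]
  have e4 : ∀ l, ∑ i, pd l (fun y => Q y i i) x = 0 := by
    intro l
    rw [← pd_sum (f := fun i y => Q y i i)
      (by intro i _; exact (contDiff_entry hQ i i).differentiable (by norm_num) x)]
    have : (fun y => ∑ i, Q y i i) = fun _ => (0:ℝ) := by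
      ext y; exact htr y
    rw [this, pd_const]
  have e5 : ∀ i j, lapM Q x i j = matGrad F (Q x) i j
      - (Matrix.trace (matGrad F (Q x)) / 3) * (if i = j then 1 else 0) := by
    intro i j
    have := congrFun (congrFun (heq x) i) j
    simp [tracelessPart, Matrix.one_apply] at this ⊢
    linarith
  simp_rw [e5]
  have a0 := e4 0
  have a1 := e4 1
  have a2 := e4 2
  generalize Matrix.trace (matGrad F (Q x)) = t
  unfold gradNormSq
  simp [Fin.sum_univ_three] at a0 a1 a2 ⊢
  linear_combination t / 3 * x 0 * a0 + t / 3 * x 1 * a1 + t / 3 * x 2 * a2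

lemma integrable_W {Q : E3 → Mat} (hQ : ContDiff ℝ 2 Q) {F : Mat → ℝ}
    (hint1 : Integrable (fun x => gradNormSq Q x))
    (hint2 : Integrable (fun x => F (Q x))) (k l : Fin 3) : Integrable (W F Q k l) := by
  have hc : ∀ k i j, Continuous (pd k (fun y => Q y i j)) := fun k i j =>
    (contDiff_pd (contDiff_entry hQ i j) k).continuous
  have hle : ∀ k i j x, pd k (fun y => Q y i j) x ^ 2 ≤ gradNormSq Q x := by
    intro k i j x
    unfold gradNormSq
    refine le_trans ?_ (Finset.single_le_sum (f := fun k => ∑ i, ∑ j, pd k (fun y => Q y i j) x ^ 2)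
      (fun _ _ => by positivity) (Finset.mem_univ k))
    refine le_trans ?_ (Finset.single_le_sum (f := fun i => ∑ j, pd k (fun y => Q y i j) x ^ 2)
      (fun _ _ => by positivity) (Finset.mem_univ i))
    exact (Finset.single_le_sum (f := fun j => pd k (fun y => Q y i j) x ^ 2)
      (fun _ _ => by positivity) (Finset.mem_univ j))
  have hI : ∀ k l i j, Integrable (fun x => pd k (fun y => Q y i j) x * pd l (fun y => Q y i j) x) := by
    intro k l i j
    refine hint1.mono' ((hc k i j).mul (hc l i j)).aestronglyMeasurable (Filter.Eventually.of_forall fun x => ?_)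
    rw [Real.norm_eq_abs, abs_le]
    have := hle k i j x
    have := hle l i j x
    constructor <;> nlinarith [sq_nonneg (pd k (fun y => Q y i j) x + pd l (fun y => Q y i j) x),
      sq_nonneg (pd k (fun y => Q y i j) x - pd l (fun y => Q y i j) x)]
  have hS : ∀ i j, Integrable (S (fun y => Q y i j) k l) := by
    intro i j
    unfold S
    refine Integrable.sub ?_ (hI k l i j)
    split_ifs
    · exact (integrable_finsetSum _ fun m _ => hI m m i j).const_mul _
    · exact integrable_zero _ _ _
  unfold W
  refine Integrable.add (integrable_finsetSum _ fun i _ => integrable_finsetSum _ fun j _ => hS i j) ?_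
  split_ifs
  · exact hint2
  · exact integrable_zero _ _ _

lemma ibp {φ g : E3 → ℝ} (hφ : ContDiff ℝ 1 φ) (hs : HasCompactSupport φ) (hg : ContDiff ℝ 1 g)
    (k : Fin 3) : Integrable (fun x => φ x * pd k g x) ∧ Integrable (fun x => pd k φ x * g x) ∧
    ∫ x, φ x * pd k g x = - ∫ x, pd k φ x * g x := by
  have hs' : HasCompactSupport (pd k φ) := by
    unfold pd
    exact hs.fderiv_apply ℝ _
  have i1 : Integrable (fun x => φ x * pd k g x) :=
    (hφ.continuous.mul (continuous_pd hg k)).integrable_of_hasCompactSupport hs.mul_right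
  have i2 : Integrable (fun x => pd k φ x * g x) :=
    ((continuous_pd hφ k).mul hg.continuous).integrable_of_hasCompactSupport hs'.mul_right
  refine ⟨i1, i2, ?_⟩
  exact integral_mul_fderiv_eq_neg_fderiv_mul_of_integrable i2 i1
    ((hφ.continuous.mul hg.continuous).integrable_of_hasCompactSupport hs.mul_right)
    (fun x _ => hφ.differentiable (by norm_num) x)
    (fun x _ => hg.differentiable (by norm_num) x)

lemma pd_scale {φ : E3 → ℝ} (hφ : ContDiff ℝ 1 φ) (c : ℝ) (k : Fin 3) (x : E3) :
    pd k (fun y => φ (c • y)) x = c * pd k φ (c • x) := by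
  unfold pd
  have h : HasFDerivAt (fun y : E3 => c • y) (c • ContinuousLinearMap.id ℝ E3) x :=
    (hasFDerivAt_id x).const_smul c
  have h2 := ((hφ.differentiable (by norm_num)) (c • x)).hasFDerivAt.comp x h
  have h3 : fderiv ℝ (fun y => φ (c • y)) x = _ := h2.fderiv
  rw [h3]
  simp

lemma dct {g f : E3 → ℝ} (hg : Continuous g) (hs : HasCompactSupport g) (hf : Integrable f) 
    (c : ℕ → ℝ) (hc : Filter.Tendsto c Filter.atTop (nhds 0)) :
    (∀ c : ℝ, Integrable (fun x => g (c • x) * f x)) ∧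
    Filter.Tendsto (fun n => ∫ x, g (c n • x) * f x) Filter.atTop (nhds (∫ x, g 0 * f x)) := by
  obtain ⟨C, hC⟩ := hg.bounded_above_of_compact_support hs
  have hm : ∀ c : ℝ, AEStronglyMeasurable (fun x : E3 => g (c • x) * f x) := fun c =>
    (by fun_prop : Continuous fun x : E3 => g (c • x)).aestronglyMeasurable.mul
      hf.aestronglyMeasurable
  have hb : ∀ (c : ℝ) (x : E3), ‖g (c • x) * f x‖ ≤ C * ‖f x‖ := by
    intro c x
    rw [norm_mul]
    gcongr
    exact hC _
  have hi : Integrable (fun x => C * ‖f x‖) := hf.norm.const_mul C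
  refine ⟨fun c => hi.mono' (hm c) (Filter.Eventually.of_forall (hb c)), ?_⟩
  refine tendsto_integral_of_dominated_convergence _ (fun n => hm _) hi
    (fun n => Filter.Eventually.of_forall (hb _)) (Filter.Eventually.of_forall fun x => ?_)
  refine Filter.Tendsto.mul_const _ ?_
  have : Filter.Tendsto (fun n => c n • x) Filter.atTop (nhds ((0:ℝ) • x)) := hc.smul_const x
  rw [zero_smul] at this
  exact (hg.tendsto 0).comp this

lemma integral_zero {T : Fin 3 → Fin 3 → E3 → ℝ} (hT : ∀ k l, ContDiff ℝ 1 (T k l))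
    (hTi : ∀ k l, Integrable (T k l)) {P : E3 → ℝ} (hP : Integrable P)
    (hd : ∀ x, ∑ k, pd k (fun y => ∑ l, T k l y * y l) x = P x) : ∫ x, P x = 0 := by
  let φ : ContDiffBump (0 : E3) := ⟨1, 2, by norm_num, by norm_num⟩
  have hφ : ContDiff ℝ 1 φ := φ.contDiff
  have hφs : HasCompactSupport φ := φ.hasCompactSupport
  have hφ0 : φ 0 = 1 := φ.one_of_mem_closedBall (by simp [φ])
  let c : ℕ → ℝ := fun n => 1 / ((n : ℝ) + 1)
  have hc : Filter.Tendsto c Filter.atTop (nhds 0) := tendsto_one_div_add_atTop_nhds_zero_nat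
  have hc0 : ∀ n, c n ≠ 0 := fun n => by positivity
  let g : Fin 3 → Fin 3 → E3 → ℝ := fun k l y => pd k φ y * y l
  have hgc : ∀ k l, Continuous (g k l) := fun k l => by
    have := continuous_pd hφ k
    fun_prop
  have hgs : ∀ k l, HasCompactSupport (g k l) := fun k l => by
    have : HasCompactSupport (pd k φ) := by
      unfold pd
      exact hφs.fderiv_apply ℝ _
    exact this.mul_right
  have hlhs := (dct hφ.continuous hφs hP c hc).2
  rw [hφ0] at hlhs
  have hrhs : Filter.Tendsto (fun n => - ∑ k, ∑ l, ∫ x, g k l (c n • x) * T k l x) Filter.atTop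
      (nhds (- ∑ k, ∑ l, ∫ x, g k l 0 * T k l x)) :=
    (tendsto_finsetSum _ fun k _ => tendsto_finsetSum _ fun l _ =>
      (dct (hgc k l) (hgs k l) (hTi k l) c hc).2).neg
  have hW : ∀ k, ContDiff ℝ 1 (fun y : E3 => ∑ l, T k l y * y l) := fun k => by fun_prop
  have heq : ∀ n, ∫ x, φ (c n • x) * P x = - ∑ k, ∑ l, ∫ x, g k l (c n • x) * T k l x := by
    intro n
    have h1 : ContDiff ℝ 1 (fun x => φ (c n • x)) := hφ.comp (contDiff_const_smul _)
    have h2 : HasCompactSupport (fun x => φ (c n • x)) := hφs.comp_smul (hc0 n)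
    have h3 := fun k => ibp h1 h2 (hW k) k
    simp_rw [← hd, Finset.mul_sum]
    rw [integral_finsetSum _ fun k _ => (h3 k).1, ← Finset.sum_neg_distrib]
    refine Finset.sum_congr rfl fun k _ => ?_
    rw [(h3 k).2.2, ← integral_finsetSum _ fun l _ => (dct (hgc k l) (hgs k l) (hTi k l) c hc).1 (c n)]
    congr 1
    refine integral_congr_ae (Filter.Eventually.of_forall fun x => ?_)
    simp only [pd_scale hφ, Finset.mul_sum, g]
    refine Finset.sum_congr rfl fun l _ => ?_
    simp
    ring
  simp_rw [heq] at hlhs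
  have := tendsto_nhds_unique hlhs hrhs
  simpa [g] using this

/-- If `F` is `C²`, `F 0 = 0`, `F ≥ 0` on the ball `{|A| ≤ r₂}` with `0` its
only zero there, then every `C²` symmetric traceless solution of `-ΔQ + L[∇F(Q)] = 0` with
`|Q| ≤ r₂` pointwise and `|∇Q|², F(Q)` integrable vanishes identically. -/
theorem stmt2 (r₂ : ℝ) (hr₂ : 0 < r₂) (F : Mat → ℝ) (hF : ContDiff ℝ 2 F) (hF0 : F 0 = 0)
    (hFpos : ∀ A : Mat, frobNorm A ≤ r₂ → 0 ≤ F A)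
    (hFzero : ∀ A : Mat, frobNorm A ≤ r₂ → F A = 0 → A = 0)
    (Q : E3 → Mat) (hQ : ContDiff ℝ 2 Q)
    (hsym : ∀ x, (Q x)ᵀ = Q x) (htr : ∀ x, Matrix.trace (Q x) = 0)
    (hbd : ∀ x, frobNorm (Q x) ≤ r₂)
    (heq : ∀ x, -lapM Q x + tracelessPart (matGrad F (Q x)) = 0)
    (hint1 : Integrable (fun x => gradNormSq Q x))
    (hint2 : Integrable (fun x => F (Q x))) :
    ∀ x : E3, Q x = 0 := by
  have hP : Integrable (fun x => (1/2) * gradNormSq Q x + 3 * F (Q x)) :=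
    (hint1.const_mul _).add (hint2.const_mul _)
  have h0 := integral_zero (contDiff_W hQ hF) (integrable_W hQ hint1 hint2) hP
    (div_id hQ hF htr heq)
  have hg : ∀ x, 0 ≤ gradNormSq Q x := fun x => by unfold gradNormSq; positivity
  have hnn : ∀ x, 0 ≤ (1/2) * gradNormSq Q x + 3 * F (Q x) := fun x => by
    have := hg x
    have := hFpos _ (hbd x)
    positivity
  have h1 := (integral_eq_zero_iff_of_nonneg hnn hP).1 h0
  have hcont : Continuous (fun x => (1/2) * gradNormSq Q x + 3 * F (Q x)) := by
    have hc : ∀ k i j, Continuous (pd k (fun y => Q y i j)) := fun k i j =>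
      (contDiff_pd (contDiff_entry hQ i j) k).continuous
    have hFQ : Continuous (fun x => F (Q x)) := hF.continuous.comp hQ.continuous
    unfold gradNormSq
    fun_prop
  have h2 := (hcont.ae_eq_iff_eq volume continuous_zero).1 h1
  intro x
  have h3 : (1/2) * gradNormSq Q x + 3 * F (Q x) = 0 := congrFun h2 x
  have := hg x
  have h4 := hFpos _ (hbd x)
  exact hFzero _ (hbd x) (by linarith)
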